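/- Suppose (B_i)_{i ∈ I} is a family of pairwise disjoint nonempty Borel subsets of ℝ whose union is ℝ, and each B_i is closed under both addition and multiplication. Then either every B_i has Lebesgue measure zero and is meager, or there exists i₁ ∈ I with B_{i₁} = ℝ. -/

import Mathlib

/-!
If a class is not both null and meagre, then it has nonempty interior: by the theorems of Steinhaus
and Pettis its sumset with itself contains an open set, and the class contains this sumset. Moreover
the product of a nonzero interior point with nearby points covers a neighbourhood of a positive
square, so the class contains an interval `(a, b)` with `0 ≤ a`.

A rational `m / n` with `(m / n) * x ^ 2 ∈ (a, b)` then shows that the multiple `m * x ^ 2` of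
`x ^ 2` lies in the class, for every `x ≠ 0`. This multiple also lies in the class of `x`, so the
two classes coincide. Finally `0 = 1 + (-1)` is in the same class.
-/

open MeasureTheory Set Filter Topology
open scoped Pointwise

section Steinhaus

variable {G : Type*} [Group G] [MeasurableSpace G]

@[to_additive]
theorem exists_measure_inter_preimage_inv_mul_ne_zero [MeasurableMul₂ G] [MeasurableInv G]
    {μ ν : Measure G} [SFinite μ] [SFinite ν] [ν.IsMulLeftInvariant] {s t : Set G}
    (hs : MeasurableSet s) (ht : MeasurableSet t) (hμs : μ s ≠ 0) (hνt : ν t ≠ 0) :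
    ∃ c, μ (s ∩ (fun z => z⁻¹ * c) ⁻¹' t) ≠ 0 := by
  by_contra! hnull
  have hmeas : MeasurableSet {p : G × G | ¬(p.2 ∈ s ∧ p.2⁻¹ * p.1 ∈ t)} :=
    ((measurable_snd hs).inter ((measurable_snd.inv.mul measurable_fst) ht)).compl
  have hae : ∀ᵐ z ∂μ, ∀ᵐ c ∂ν, ¬(z ∈ s ∧ z⁻¹ * c ∈ t) :=
    (Measure.ae_ae_comm hmeas).1 <|
      ae_of_all _ fun c => measure_eq_zero_iff_ae_notMem.1 (hnull c)
  refine hμs (measure_eq_zero_iff_ae_notMem.2 ?_)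
  filter_upwards [hae] with z hz hzs
  have hpre : ν ((fun c => z⁻¹ * c) ⁻¹' t) = 0 :=
    measure_eq_zero_iff_ae_notMem.2 <| hz.mono fun c hc hct => hc ⟨hzs, hct⟩
  exact hνt (by rwa [measure_preimage_mul] at hpre)

@[to_additive]
theorem interior_mul_nonempty_of_measure_ne_zero [TopologicalSpace G] [IsTopologicalGroup G]
    [BorelSpace G] [LocallyCompactSpace G] [SecondCountableTopology G]
    {μ : Measure G} [μ.IsHaarMeasure] {s t : Set G}
    (hs : NullMeasurableSet s μ) (ht : NullMeasurableSet t μ) (hμs : μ s ≠ 0) (hμt : μ t ≠ 0) :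
    (interior (s * t)).Nonempty := by
  obtain ⟨s', hs's, hs', hss'⟩ := hs.exists_measurable_subset_ae_eq
  obtain ⟨t', ht't, ht', htt'⟩ := ht.exists_measurable_subset_ae_eq
  rw [← measure_congr hss'] at hμs
  rw [← measure_congr htt'] at hμt
  obtain ⟨c, hc⟩ := exists_measure_inter_preimage_inv_mul_ne_zero (μ := μ) hs' ht' hμs hμt
  set w := s' ∩ (fun z => z⁻¹ * c) ⁻¹' t'
  have hw : MeasurableSet w := hs'.inter ((measurable_inv.mul_const c) ht')
  have hnhds : w / w ∈ 𝓝 (c * c⁻¹) := by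
    rw [mul_inv_cancel]
    exact Measure.div_mem_nhds_one_of_haar_pos μ w hw (pos_iff_ne_zero.2 hc)
  refine ⟨c, mem_interior_iff_mem_nhds.2 ?_⟩
  filter_upwards [(continuous_mul_const c⁻¹).tendsto c hnhds] with y hy
  obtain ⟨z, hz, z', hz', hzz'⟩ := mem_div.1 hy
  refine mem_mul.2 ⟨z, hs's hz.1, z'⁻¹ * c, ht't hz'.2, ?_⟩
  rw [← mul_assoc, ← div_eq_mul_inv, hzz', inv_mul_cancel_right]

end Steinhaus

section Pettis

theorem exists_isOpen_nonempty_residualEq {X : Type*} [TopologicalSpace X] {s : Set X}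
    (hs : BaireMeasurableSet s) (hsm : ¬IsMeagre s) :
    ∃ u, IsOpen u ∧ u.Nonempty ∧ s =ᵇ u := by
  obtain ⟨u, hu, hsu⟩ := hs.residualEq_isOpen
  refine ⟨u, hu, nonempty_iff_ne_empty.2 ?_, hsu⟩
  rintro rfl
  exact hsm (eventuallyEq_empty.1 hsu)

variable {G : Type*} [Group G] [TopologicalSpace G] [IsTopologicalGroup G] [BaireSpace G]

@[to_additive]
theorem mul_subset_mul_of_residualEq_isOpen {s t u v : Set G} (hu : IsOpen u) (hv : IsOpen v)
    (hsu : s =ᵇ u) (htv : t =ᵇ v) : u * v ⊆ s * t := by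
  rintro _ ⟨a, ha, b, hb, rfl⟩
  let reflect : G ≃ₜ G := (Homeomorph.inv G).trans (Homeomorph.mulRight (a * b))
  have hopen : IsOpen (u ∩ reflect ⁻¹' v) := hu.inter (hv.preimage reflect.continuous)
  have hne : (u ∩ reflect ⁻¹' v).Nonempty := ⟨a, ha, by simpa [reflect] using hb⟩
  have hreflect : Tendsto reflect (residual G) (residual G) := reflect.residual_map_eq.le
  have hres : ∀ᶠ z in residual G, (z ∈ s ↔ z ∈ u) ∧ (reflect z ∈ t ↔ reflect z ∈ v) :=
    hsu.mem_iff.and (hreflect.eventually htv.mem_iff)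
  obtain ⟨z, ⟨hzu, hzv⟩, hzs, hzt⟩ :=
    (dense_of_mem_residual hres).inter_open_nonempty _ hopen hne
  exact ⟨z, hzs.2 hzu, reflect z, hzt.2 hzv, by simp [reflect]⟩

@[to_additive]
theorem interior_mul_nonempty_of_not_isMeagre {s t : Set G} (hs : BaireMeasurableSet s)
    (ht : BaireMeasurableSet t) (hsm : ¬IsMeagre s) (htm : ¬IsMeagre t) :
    (interior (s * t)).Nonempty := by
  obtain ⟨u, hu, hune, hsu⟩ := exists_isOpen_nonempty_residualEq hs hsm
  obtain ⟨v, hv, hvne, htv⟩ := exists_isOpen_nonempty_residualEq ht htm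
  exact (hune.mul hvne).mono <|
    interior_maximal (mul_subset_mul_of_residualEq_isOpen hu hv hsu htv) hu.mul_right

end Pettis

theorem nsmul_mem_of_add_mem {M : Type*} [AddMonoid M] {s : Set M}
    (hadd : ∀ x ∈ s, ∀ y ∈ s, x + y ∈ s) {x : M} (hx : x ∈ s) {n : ℕ} (hn : n ≠ 0) :
    n • x ∈ s := by
  induction n with
  | zero => exact absurd rfl hn
  | succ n ih =>
    rcases eq_or_ne n 0 with rfl | hn0
    · simpa only [zero_add, one_nsmul] using hx
    · rw [succ_nsmul]
      exact hadd _ (ih hn0) _ hx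

section OrderedField

variable {K : Type*} [Field K] [LinearOrder K] [IsStrictOrderedRing K]

theorem exists_nsmul_mem_of_Ioo_subset [Archimedean K] {s : Set K}
    (hadd : ∀ x ∈ s, ∀ y ∈ s, x + y ∈ s) {a b : K} (ha : 0 ≤ a) (hab : a < b)
    (hs : Ioo a b ⊆ s) {x : K} (hx : 0 < x) : ∃ n : ℕ, n ≠ 0 ∧ n • x ∈ s := by
  obtain ⟨q, haq, hqb⟩ := exists_rat_btwn (div_lt_div_of_pos_right hab hx)
  have hqs : (q : K) * x ∈ s := hs ⟨(div_lt_iff₀ hx).1 haq, (lt_div_iff₀ hx).1 hqb⟩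
  have hq : 0 < q := Rat.cast_pos.1 ((div_nonneg ha hx.le).trans_lt haq)
  lift q to ℚ≥0 using hq.le
  have hden : q.den • (((q : ℚ) : K) * x) = q.num • x := by
    rw [nsmul_eq_mul, nsmul_eq_mul, ← mul_assoc]
    exact_mod_cast congrArg (fun r : ℚ≥0 => (r : K) * x) q.den_mul_eq_num
  refine ⟨q.num, NNRat.num_ne_zero.2 (NNRat.coe_pos.1 hq).ne', ?_⟩
  rw [← hden]
  exact nsmul_mem_of_add_mem hadd hqs q.den_ne_zero

variable [TopologicalSpace K] [OrderTopology K]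

theorem exists_Ioo_subset_of_mul_mem {s : Set K} (hmul : ∀ x ∈ s, ∀ y ∈ s, x * y ∈ s)
    (hs : (interior s).Nonempty) : ∃ a b, 0 ≤ a ∧ a < b ∧ Ioo a b ⊆ s := by
  obtain ⟨z, hz, hz0 : z ≠ 0⟩ :=
    (dense_compl_singleton (0 : K)).inter_open_nonempty _ isOpen_interior hs
  have hnhds : s ∈ 𝓝 (z * z) := by
    have hdiv : Tendsto (fun y => y / z) (𝓝 (z * z)) (𝓝 z) :=
      (continuous_id.div_const z).tendsto' _ _ (mul_div_cancel_right₀ z hz0)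
    filter_upwards [hdiv (mem_interior_iff_mem_nhds.1 hz)] with y hy
    simpa only [mul_div_cancel₀ _ hz0] using hmul z (interior_subset hz) _ hy
  obtain ⟨b, hb, hsub⟩ := exists_Ico_subset_of_mem_nhds hnhds (exists_gt _)
  exact ⟨z * z, b, mul_self_nonneg z, hb, Ioo_subset_Ico_self.trans hsub⟩

theorem eq_univ_of_interior_nonempty_of_partition [Archimedean K] {ι : Type*} {B : ι → Set K}
    (hdisj : Pairwise (Function.onFun Disjoint B)) (hcover : ⋃ i, B i = univ)
    (hadd : ∀ i, ∀ x ∈ B i, ∀ y ∈ B i, x + y ∈ B i)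
    (hmul : ∀ i, ∀ x ∈ B i, ∀ y ∈ B i, x * y ∈ B i) {i : ι}
    (hi : (interior (B i)).Nonempty) : B i = univ := by
  obtain ⟨a, b, ha, hab, hsub⟩ := exists_Ioo_subset_of_mul_mem (hmul i) hi
  have hne_zero : ∀ x : K, x ≠ 0 → x ∈ B i := fun x hx => by
    obtain ⟨j, hxj⟩ := iUnion_eq_univ_iff.1 hcover x
    obtain ⟨n, hn, hni⟩ :=
      exists_nsmul_mem_of_Ioo_subset (hadd i) ha hab hsub (mul_self_pos.2 hx)
    have hnj : n • (x * x) ∈ B j := nsmul_mem_of_add_mem (hadd j) (hmul j x hxj x hxj) hn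
    rwa [hdisj.eq (not_disjoint_iff.2 ⟨_, hni, hnj⟩)]
  have hzero : (0 : K) ∈ B i := by
    simpa only [add_neg_cancel] using
      hadd i 1 (hne_zero 1 one_ne_zero) (-1) (hne_zero (-1) (neg_ne_zero.2 one_ne_zero))
  refine eq_univ_of_forall fun x => ?_
  rcases eq_or_ne x 0 with rfl | hx
  exacts [hzero, hne_zero x hx]

end OrderedField

theorem stmt_9_general {ι : Type*} (B : ι → Set ℝ)
    (hnull : ∀ i, NullMeasurableSet (B i)) (hbaire : ∀ i, BaireMeasurableSet (B i))
    (hdisj : Pairwise (Function.onFun Disjoint B)) (hcover : ⋃ i, B i = univ)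
    (hadd : ∀ i, ∀ x ∈ B i, ∀ y ∈ B i, x + y ∈ B i)
    (hmul : ∀ i, ∀ x ∈ B i, ∀ y ∈ B i, x * y ∈ B i) :
    (∀ i, volume (B i) = 0 ∧ IsMeagre (B i)) ∨ ∃ i₁, B i₁ = univ := by
  refine or_iff_not_imp_left.2 fun hlarge => ?_
  obtain ⟨i, hi⟩ := not_forall.1 hlarge
  have hsum : (interior (B i + B i)).Nonempty := by
    rcases not_and_or.1 hi with hpos | hmeagre
    · exact interior_add_nonempty_of_measure_ne_zero (hnull i) (hnull i) hpos hpos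
    · exact interior_add_nonempty_of_not_isMeagre (hbaire i) (hbaire i) hmeagre hmeagre
  have hint : (interior (B i)).Nonempty :=
    hsum.mono (interior_mono (add_subset_iff.2 (hadd i)))
  exact ⟨i, eq_univ_of_interior_nonempty_of_partition hdisj hcover hadd hmul hint⟩

/-- If `ℝ` is partitioned into nonempty Borel sets `B i`, each closed under both addition and
multiplication, then either every `B i` is Lebesgue null and meager, or some `B i₁ = ℝ`. -/
theorem stmt_9 {ι : Type*} (B : ι → Set ℝ)
    (hmeas : ∀ i, MeasurableSet (B i))
    (hne : ∀ i, (B i).Nonempty)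
    (hdisj : Pairwise (Function.onFun Disjoint B))
    (hcover : (⋃ i, B i) = Set.univ)
    (hadd : ∀ i, ∀ x ∈ B i, ∀ y ∈ B i, x + y ∈ B i)
    (hmul : ∀ i, ∀ x ∈ B i, ∀ y ∈ B i, x * y ∈ B i) :
    (∀ i, MeasureTheory.volume (B i) = 0 ∧ IsMeagre (B i)) ∨
      ∃ i₁, B i₁ = Set.univ :=
  stmt_9_general B (fun i => (hmeas i).nullMeasurableSet) (fun i => (hmeas i).baireMeasurableSet)
    hdisj hcover hadd hmul
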